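/- Let G be a simple undirected graph, Q a finite clique in G, u ∈ Q, and S a finite set of vertices disjoint from Q such that S is a clique in G and every vertex v ∈ S has set of non-neighbors in Q exactly equal to {u}. Then (Q \ {u}) ∪ S is a clique of cardinality |Q| − 1 + |S|; in particular, if |S| ≥ 2 then this clique is strictly larger than Q. -/

import Mathlib

/-- The (1,k)-swap yields a clique of cardinality `|Q| - 1 + |S|`; if `|S| ≥ 2`
the new clique is strictly larger than `Q`. -/
theorem clique_one_k_swap_card {V : Type*} (G : SimpleGraph V) (Q S : Set V) (u : V)
    (hQ : G.IsClique Q) (hQfin : Q.Finite) (hu : u ∈ Q)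
    (hSfin : S.Finite) (hdisj : Disjoint S Q) (hS : G.IsClique S)
    (hcand : ∀ v ∈ S, {x ∈ Q | ¬ G.Adj v x} = {u}) :
    G.IsClique ((Q \ {u}) ∪ S) ∧
      ((Q \ {u}) ∪ S).ncard = Q.ncard - 1 + S.ncard ∧
      (2 ≤ S.ncard → Q.ncard < ((Q \ {u}) ∪ S).ncard) := by
  have hadj : ∀ v ∈ S, ∀ x ∈ Q \ {u}, G.Adj v x := by
    intro v hv x hx
    by_contra hvx
    have hxu : x ∈ ({u} : Set V) := hcand v hv ▸ ⟨hx.1, hvx⟩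
    exact hx.2 hxu
  have hcard : ((Q \ {u}) ∪ S).ncard = Q.ncard - 1 + S.ncard := by
    rw [Set.ncard_union_eq (hdisj.symm.mono_left Set.sdiff_subset) hQfin.sdiff hSfin,
      Set.ncard_sdiff_singleton_of_mem hu]
  refine ⟨?_, hcard, fun h => by omega⟩
  rintro x (hx | hx) y (hy | hy) hxy
  · exact hQ hx.1 hy.1 hxy
  · exact (hadj y hy x hx).symm
  · exact hadj x hx y hy
  · exact hS hx hy hxy
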